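/- Let f ∈ R[x_1,...,x_n] be homogeneous of degree d and write f^2 = Σ a·x^μ as a sum of terms. Then Cov(f) = (π^{n/2} / (2^d Γ(n/2 + d + 1))) · Σ a·Ψ(x^μ), where Ψ(x^μ) = (∏_{k=1}^n η(μ_k)!!) · [diag(μ) + I_n if μ has no odd entries; e_u e_v^T + e_v e_u^T if μ has exactly two odd entries at indices u, v; the zero matrix otherwise], and η(s) = s if s is odd, s-1 if s is even. -/

import Mathlib

open Matrix

open MeasureTheory Metric MvPolynomial

/-- Polynomial-weighted covariance matrix: Cov(f) = ∫_{S^{n-1}} f(x)² x xᵀ dμ(x). -/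
noncomputable def pwCov {n : ℕ} (f : (Fin n → ℝ) → ℝ) : Matrix (Fin n) (Fin n) ℝ :=
  Matrix.of fun i j =>
    ∫ x : Metric.sphere (0 : EuclideanSpace ℝ (Fin n)) 1,
      (f (fun k => (x : EuclideanSpace ℝ (Fin n)) k))^2 * (x : EuclideanSpace ℝ (Fin n)) i
        * (x : EuclideanSpace ℝ (Fin n)) j ∂ (MeasureTheory.volume.toSphere)

/-- η(s) rounds s down to the nearest odd number. -/
def eta (s : ℕ) : ℕ := if Odd s then s else s - 1

open scoped Classical in
/-- Ψ(x^μ) = (∏ₖ η(μₖ)!!) · (diag(μ)+Iₙ if μ has no odd entries;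
eₑeᵥᵀ+eᵥeₑᵀ if μ has exactly two odd entries at indices u,v; 0 otherwise),
written entrywise. -/
noncomputable def Psi {n : ℕ} (μ : Fin n →₀ ℕ) : Matrix (Fin n) (Fin n) ℝ :=
  Matrix.of fun i j =>
    (∏ k, (Nat.doubleFactorial (eta (μ k)) : ℝ)) *
      (if ∀ k, Even (μ k) then (if i = j then (μ i : ℝ) + 1 else 0)
       else if (Finset.univ.filter fun k => Odd (μ k)) = {i, j} ∧ i ≠ j then 1 else 0)

/-- The one-dimensional Gaussian moment `(k-1)!!` for even `k`, zero for odd `k`. -/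
noncomputable def gmom (k : ℕ) : ℝ := if Even k then (Nat.doubleFactorial (k - 1) : ℝ) else 0

theorem radial_integral (k : ℕ) :
    ∫ x in Set.Ioi (0 : ℝ), x ^ k * Real.exp (-x ^ 2) = (1 / 2) * Real.Gamma (((k : ℝ) + 1) / 2) := by
  have h := integral_rpow_mul_exp_neg_rpow (p := 2) (q := k) (by norm_num)
    (by have := Nat.cast_nonneg (α := ℝ) k; linarith)
  rw [← h]
  refine setIntegral_congr_fun measurableSet_Ioi fun x _ => ?_
  simp [Real.rpow_natCast]

theorem gauss_moment (k : ℕ) :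
    ∫ x : ℝ, x ^ k * Real.exp (-x ^ 2) = gmom k * √Real.pi / √2 ^ k := by
  unfold gmom
  split_ifs with hk
  · obtain ⟨m, rfl⟩ := hk
    have h := integral_comp_abs (f := fun x : ℝ => x ^ (m + m) * Real.exp (-x ^ 2))
    simp only [sq_abs, (Even.add_self m).pow_abs] at h
    rw [h, radial_integral]
    have e : (((m + m : ℕ) : ℝ) + 1) / 2 = m + 1 / 2 := by push_cast; ring
    rw [e, Real.Gamma_nat_add_half, ← two_mul, pow_mul, Real.sq_sqrt (by norm_num)]
    ring
  · have ho : Odd k := Nat.not_even_iff_odd.mp hk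
    have h := integral_neg_eq_self (fun x : ℝ => x ^ k * Real.exp (-x ^ 2)) volume
    simp only [ho.neg_pow, even_two.neg_pow, neg_mul, integral_neg] at h
    simp only [zero_mul, zero_div]
    linarith

theorem gauss_moment_prod {n : ℕ} (ν : Fin n → ℕ) :
    ∫ x : EuclideanSpace ℝ (Fin n), (∏ k, x k ^ ν k) * Real.exp (-‖x‖ ^ 2)
      = ∏ k, (gmom (ν k) * √Real.pi / √2 ^ ν k) := by
  rw [← (PiLp.volume_preserving_toLp (Fin n)).integral_comp
    (MeasurableEquiv.toLp 2 (Fin n → ℝ)).measurableEmbedding]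
  simp_rw [← gauss_moment]
  rw [← integral_fintype_prod_volume_eq_prod (fun k (x : ℝ) => x ^ ν k * Real.exp (-x ^ 2))]
  refine integral_congr_ae (.of_forall fun x => ?_)
  simp [EuclideanSpace.norm_sq_eq, Finset.prod_mul_distrib, ← Real.exp_sum]

theorem polar_prod {n : ℕ} (hn : 0 < n) (ν : Fin n → ℕ) :
    ∫ x : EuclideanSpace ℝ (Fin n), (∏ k, x k ^ ν k) * Real.exp (-‖x‖ ^ 2)
      = (∫ x : Metric.sphere (0 : EuclideanSpace ℝ (Fin n)) 1,
          ∏ k, (x : EuclideanSpace ℝ (Fin n)) k ^ ν k ∂(volume.toSphere)) *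
        ∫ r in Set.Ioi (0 : ℝ), r ^ ((∑ k, ν k) + (n - 1)) * Real.exp (-r ^ 2) := by
  have : Nonempty (Fin n) := ⟨⟨0, hn⟩⟩
  have hd : Module.finrank ℝ (EuclideanSpace ℝ (Fin n)) = n := by simp
  let E := EuclideanSpace ℝ (Fin n)
  calc
    ∫ x : E, (∏ k, x k ^ ν k) * Real.exp (-‖x‖ ^ 2)
      = ∫ x : ({(0)}ᶜ : Set E), (∏ k, x.1 k ^ ν k) * Real.exp (-‖x.1‖ ^ 2)
          ∂((volume : Measure E).comap (↑)) := by
        rw [integral_subtype_comap (measurableSet_singleton _).compl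
          fun x : E ↦ (∏ k, x k ^ ν k) * Real.exp (-‖x‖ ^ 2), restrict_compl_singleton]
    _ = ∫ p : Metric.sphere (0 : E) 1 × Set.Ioi (0 : ℝ),
          (∏ k, (p.1 : E) k ^ ν k) * ((p.2 : ℝ) ^ (∑ k, ν k) * Real.exp (-(p.2 : ℝ) ^ 2))
          ∂(volume : Measure E).toSphere.prod (.volumeIoiPow (Module.finrank ℝ E - 1)) := by
        rw [← (volume : Measure E).measurePreserving_homeomorphUnitSphereProd.integral_comp
          (Homeomorph.measurableEmbedding _)]
        refine integral_congr_ae (.of_forall fun x => ?_)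
        have hx : ‖(x : E)‖ ≠ 0 := norm_ne_zero_iff.mpr x.2
        have hc : ∀ k, (‖(x : E)‖⁻¹ • (x : E)) k = ‖(x : E)‖⁻¹ * (x : E) k := fun k => rfl
        simp only [homeomorphUnitSphereProd_apply_snd_coe, homeomorphUnitSphereProd_apply_fst_coe,
          hc, mul_pow, Finset.prod_mul_distrib, Finset.prod_pow_eq_pow_sum, ← mul_assoc]
        congr 1
        rw [mul_comm, ← mul_assoc, ← mul_pow, mul_inv_cancel₀ hx, one_pow, one_mul]
    _ = _ := by
        rw [integral_prod_mul (μ := (volume : Measure E).toSphere)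
          (ν := .volumeIoiPow (Module.finrank ℝ E - 1))
          (fun x : Metric.sphere (0 : E) 1 => ∏ k, (x : E) k ^ ν k)
          (fun r : Set.Ioi (0 : ℝ) => (r : ℝ) ^ (∑ k, ν k) * Real.exp (-(r : ℝ) ^ 2)), hd]
        congr 1
        simp only [Measure.volumeIoiPow, ENNReal.ofReal]
        rw [integral_withDensity_eq_integral_smul,
          integral_subtype_comap measurableSet_Ioi fun a : ℝ ↦ Real.toNNReal (a ^ (n - 1)) •
            (a ^ (∑ k, ν k) * Real.exp (-a ^ 2)),
          setIntegral_congr_fun measurableSet_Ioi fun x hx ↦ ?_]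
        · rw [NNReal.smul_def, Real.coe_toNNReal _ (pow_nonneg (Set.mem_Ioi.mp hx).le _),
            smul_eq_mul, pow_add]
          ring
        · exact (measurable_subtype_coe.pow_const _).real_toNNReal

theorem sphere_moment {n d : ℕ} (hn : 0 < n) (ν : Fin n → ℕ) (hν : ∑ k, ν k = 2 * d + 2) :
    ∫ x : Metric.sphere (0 : EuclideanSpace ℝ (Fin n)) 1,
          ∏ k, (x : EuclideanSpace ℝ (Fin n)) k ^ ν k ∂(volume.toSphere)
      = (Real.pi ^ ((n : ℝ) / 2) / (2 ^ d * Real.Gamma ((n : ℝ) / 2 + d + 1))) *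
        ∏ k, gmom (ν k) := by
  have h := polar_prod hn ν
  rw [gauss_moment_prod, radial_integral, hν] at h
  have e : (((2 * d + 2 + (n - 1) : ℕ) : ℝ) + 1) / 2 = (n : ℝ) / 2 + d + 1 := by
    rw [Nat.cast_add, Nat.cast_sub hn]; push_cast; ring
  have hG : Real.Gamma ((n : ℝ) / 2 + d + 1) ≠ 0 := (Real.Gamma_pos_of_pos (by positivity)).ne'
  have hpi : (√Real.pi) ^ n = Real.pi ^ ((n : ℝ) / 2) := by
    rw [Real.sqrt_eq_rpow, ← Real.rpow_natCast, ← Real.rpow_mul Real.pi_pos.le]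
    congr 1; ring
  have h2 : (√2 : ℝ) ^ (2 * d + 2) = 2 ^ d * 2 := by
    rw [show 2 * d + 2 = 2 * (d + 1) by ring, pow_mul, Real.sq_sqrt (by norm_num), pow_succ]
  rw [e, Finset.prod_div_distrib, Finset.prod_mul_distrib, Finset.prod_pow_eq_pow_sum, hν, h2,
    Finset.prod_const, Finset.card_univ, Fintype.card_fin, hpi] at h
  field_simp at h ⊢
  linarith

theorem prod_pow_add_single {n : ℕ} (μ : Fin n → ℕ) (i j : Fin n) (x : Fin n → ℝ) :
    (∏ k, x k ^ μ k) * x i * x j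
      = ∏ k, x k ^ (μ k + (if k = i then 1 else 0) + (if k = j then 1 else 0)) := by
  simp_rw [pow_add, Finset.prod_mul_distrib]
  simp [pow_ite]

theorem gmom_even {k : ℕ} (h : Even k) : gmom k = (Nat.doubleFactorial (eta k) : ℝ) := by
  simp [gmom, eta, h, Nat.not_odd_iff_even.mpr h]

theorem gmom_odd {k : ℕ} (h : Odd k) : gmom k = 0 := by
  simp [gmom, h]

theorem gmom_succ_odd {k : ℕ} (h : Odd k) : gmom (k + 1) = (Nat.doubleFactorial (eta k) : ℝ) := by
  simp [gmom, eta, h, h.add_one]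

theorem gmom_add_two {k : ℕ} (h : Even k) :
    gmom (k + 1 + 1) = (Nat.doubleFactorial (eta k) : ℝ) * (k + 1) := by
  have h2 : Even (k + 1 + 1) := by simpa [Nat.even_add_one] using h
  rw [gmom, if_pos h2, eta, if_neg (Nat.not_odd_iff_even.mpr h)]
  rcases k with _ | k
  · simp
  · simp only [Nat.add_sub_cancel, Nat.doubleFactorial]
    push_cast; ring

theorem prod_gmom {n : ℕ} (μ : Fin n →₀ ℕ) (i j : Fin n) :
    ∏ k, gmom (μ k + (if k = i then 1 else 0) + (if k = j then 1 else 0)) = Psi μ i j := by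
  classical
  rw [Psi, Matrix.of_apply]
  by_cases hij : i = j
  · subst hij
    split_ifs with he
    · rw [← Finset.mul_prod_erase _ _ (Finset.mem_univ i),
        ← Finset.mul_prod_erase _ (fun k => (Nat.doubleFactorial (eta (μ k)) : ℝ))
          (Finset.mem_univ i)]
      simp only [if_true]
      rw [gmom_add_two (he i)]
      rw [Finset.prod_congr rfl (g := fun k => (Nat.doubleFactorial (eta (μ k)) : ℝ))]
      · ring
      · intro k hk
        simp [Finset.ne_of_mem_erase hk, gmom_even (he k)]
    · exact absurd rfl ‹¬ i = i›
    · exact absurd rfl (‹_ ∧ i ≠ i›).2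
    · push Not at he
      obtain ⟨k, hk⟩ := he
      rw [mul_zero]
      refine Finset.prod_eq_zero (Finset.mem_univ k) (gmom_odd ?_)
      have := Nat.not_even_iff_odd.mp hk
      split_ifs <;> grind
  · simp only [hij, if_false, ne_eq, not_false_eq_true, and_true]
    split_ifs with he hs
    · rw [mul_zero]
      refine Finset.prod_eq_zero (Finset.mem_univ i) (gmom_odd ?_)
      simp [hij, (he i).add_one]
    · rw [mul_one]
      refine Finset.prod_congr rfl fun k _ => ?_
      have hk : Odd (μ k) ↔ k = i ∨ k = j := by
        have := congrArg (k ∈ ·) hs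
        simpa using this
      by_cases h1 : k = i
      · have h2 : k ≠ j := h1 ▸ hij
        simp [h1, hij, gmom_succ_odd (h1 ▸ hk.mpr (Or.inl h1))]
      · by_cases h2 : k = j
        · have : Odd (μ j) := h2 ▸ hk.mpr (Or.inr h2)
          simp [h2, Ne.symm hij, gmom_succ_odd this]
        · simp [h1, h2, gmom_even (Nat.not_odd_iff_even.mp (fun h => (hk.mp h).elim h1 h2))]
    · rw [mul_zero]
      have : ∃ k, ¬ (Odd (μ k) ↔ k = i ∨ k = j) := by
        by_contra! hc
        exact hs (by ext k; simp [hc k])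
      obtain ⟨k, hk⟩ := this
      refine Finset.prod_eq_zero (Finset.mem_univ k) (gmom_odd ?_)
      split_ifs <;> grind

/-- for homogeneous f of degree d, writing f² = Σ a·x^μ,
Cov(f) = (π^{n/2} / (2^d Γ(n/2+d+1))) Σ a·Ψ(x^μ). -/
theorem pwCov_formula {n d : ℕ} (f : MvPolynomial (Fin n) ℝ) (hf : f.IsHomogeneous d) :
    pwCov (fun y => eval y f)
      = (Real.pi ^ ((n : ℝ) / 2) / (2 ^ d * Real.Gamma ((n : ℝ) / 2 + d + 1))) •
          ∑ μ ∈ (f ^ 2).support, (f ^ 2).coeff μ • Psi μ := by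
  ext i j
  have hn : 0 < n := i.pos
  simp only [pwCov, Matrix.of_apply, Matrix.smul_apply, Matrix.sum_apply, smul_eq_mul]
  have key : ∀ x : Metric.sphere (0 : EuclideanSpace ℝ (Fin n)) 1,
      (eval (fun k => (x : EuclideanSpace ℝ (Fin n)) k) f) ^ 2
        * (x : EuclideanSpace ℝ (Fin n)) i * (x : EuclideanSpace ℝ (Fin n)) j
      = ∑ μ ∈ (f ^ 2).support, (f ^ 2).coeff μ * ∏ k, (x : EuclideanSpace ℝ (Fin n)) k ^
          (μ k + (if k = i then 1 else 0) + (if k = j then 1 else 0)) := by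
    intro x
    rw [← map_pow, eval_eq', Finset.sum_mul, Finset.sum_mul]
    refine Finset.sum_congr rfl fun μ _ => ?_
    rw [← prod_pow_add_single μ i j (fun k => (x : EuclideanSpace ℝ (Fin n)) k)]
    ring
  simp_rw [key]
  rw [integral_finsetSum, Finset.mul_sum]
  · refine Finset.sum_congr rfl fun μ hμ => ?_
    rw [integral_const_mul, sphere_moment (d := d) hn, prod_gmom]
    · ring
    · have h := (hf.pow 2) (MvPolynomial.mem_support_iff.mp hμ)
      rw [Finsupp.weight_apply, Finsupp.sum_fintype _ _ (by simp)] at h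
      simp only [Pi.one_apply, smul_eq_mul, mul_one] at h
      simp [Finset.sum_add_distrib, h]
      ring
  · intro μ _
    refine Continuous.integrable_of_hasCompactSupport ?_ (HasCompactSupport.of_compactSpace _)
    fun_prop
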